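/- arXiv:2605.31356 — 2 statements merged into one kernel-verified Lean document; each statement's English description precedes it below -/
import Mathlib

section
/- Let f : ℂ → ℂ be an entire function and for each n ∈ ℕ let J_{n,f}(z) = Σ_{k=0}^n f^{(k)}(0)·C(n,k)·z^k be its n-th Jensen polynomial. Then J_{n,f}(z/n) converges to f(z) uniformly on compact subsets of ℂ as n → ∞; that is, for every compact K ⊂ ℂ, sup_{z∈K} |J_{n,f}(z/n) − f(z)| → 0. -/
/-!
Write `a k = f^{(k)}(0) / k!` for the Taylor coefficients of `f` at `0`, and
`w n k = n (n - 1) ⋯ (n - k + 1) / n ^ k`. Since `C(n,k) k! = n (n - 1) ⋯ (n - k + 1)`,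
the rescaled Jensen polynomial is the weighted Taylor series `∑ k, w n k * a k * z ^ k`, the
weights vanishing for `k > n`. The weights lie in `[0, 1]` and tend to `1` as `n → ∞` for fixed
`k`. Hence for `‖z‖ ≤ R` the distance to `f z` is at most `∑ k, |w n k - 1| * ‖a k‖ * R ^ k`,
a bound independent of `z`, which tends to `0` by dominated convergence for series (Tannery's
theorem): the terms are dominated by `‖a k‖ * R ^ k`, summable because `f` is entire.
-/

open Complex Filter Topology

/-- The weight `n (n - 1) ⋯ (n - k + 1) / n ^ k` that the rescaled `n`-th Jensen polynomial puts
on the `k`-th Taylor term; it is `0` for `k > n`. -/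
noncomputable def jensenWeight (n k : ℕ) : ℝ := (n.descFactorial k : ℝ) / (n : ℝ) ^ k

lemma jensenWeight_nonneg (n k : ℕ) : 0 ≤ jensenWeight n k := by
  unfold jensenWeight; positivity

lemma jensenWeight_le_one (n k : ℕ) : jensenWeight n k ≤ 1 :=
  div_le_one_of_le₀ (mod_cast n.descFactorial_le_pow k) (by positivity)

lemma abs_jensenWeight_sub_one_le (n k : ℕ) : |jensenWeight n k - 1| ≤ 1 :=
  abs_le.2 ⟨by linarith [jensenWeight_nonneg n k], by linarith [jensenWeight_le_one n k]⟩

lemma tendsto_jensenWeight (k : ℕ) :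
    Tendsto (fun n : ℕ => jensenWeight n k) atTop (𝓝 1) := by
  refine (Asymptotics.isEquivalent_iff_tendsto_one ?_).1 (isEquivalent_descFactorial k)
  filter_upwards [eventually_gt_atTop 0] with n hn
  positivity

/-- Also valid for `n = 0`, where both sides are `1` for `k = 0` and `0` otherwise. -/
lemma choose_mul_div_pow (n k : ℕ) (z : ℂ) :
    (n.choose k : ℂ) * (z / (n : ℂ)) ^ k
      = (jensenWeight n k : ℂ) * ((k.factorial : ℂ)⁻¹ * z ^ k) := by
  have hk : (k.factorial : ℂ) ≠ 0 := mod_cast k.factorial_ne_zero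
  rw [jensenWeight, Nat.descFactorial_eq_factorial_mul_choose, div_pow]
  push_cast
  rw [div_eq_mul_inv, div_eq_mul_inv]
  calc _ = (k.factorial : ℂ) * (k.factorial : ℂ)⁻¹ *
        ((n.choose k : ℂ) * (z ^ k * ((n : ℂ) ^ k)⁻¹)) := by rw [mul_inv_cancel₀ hk, one_mul]
    _ = _ := by ring

/-- The `k`-th term of the Taylor series of `f` at `0`, evaluated at `z`. -/
noncomputable def taylorTerm (f : ℂ → ℂ) (k : ℕ) (z : ℂ) : ℂ :=
  iteratedDeriv k f 0 * ((k.factorial : ℂ)⁻¹ * z ^ k)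

lemma hasSum_taylorTerm {f : ℂ → ℂ} (hf : Differentiable ℂ f) (z : ℂ) :
    HasSum (fun k => taylorTerm f k z) (f z) := by
  convert! Complex.hasSum_taylorSeries_of_entire hf 0 z using 2 with k
  simp only [taylorTerm, sub_zero, smul_eq_mul]
  ring

lemma norm_taylorTerm_le (f : ℂ → ℂ) (k : ℕ) {z : ℂ} {R : ℝ} (hz : ‖z‖ ≤ R) :
    ‖taylorTerm f k z‖ ≤ ‖taylorTerm f k R‖ := by
  have hR : |R| = R := abs_of_nonneg ((norm_nonneg z).trans hz)
  simp only [taylorTerm, norm_mul, norm_pow, Complex.norm_real, Real.norm_eq_abs, hR]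
  gcongr

lemma hasSum_jensen (f : ℂ → ℂ) (n : ℕ) (z : ℂ) :
    HasSum (fun k => (jensenWeight n k : ℂ) * taylorTerm f k z)
      (∑ k ∈ Finset.range (n + 1),
          iteratedDeriv k f 0 * (n.choose k : ℂ) * (z / (n : ℂ)) ^ k) := by
  have h : ∀ k, (jensenWeight n k : ℂ) * taylorTerm f k z
      = iteratedDeriv k f 0 * (n.choose k : ℂ) * (z / (n : ℂ)) ^ k := fun k => by
    rw [mul_assoc, choose_mul_div_pow, taylorTerm]
    ring
  simp only [h]
  refine hasSum_sum_of_ne_finset_zero fun k hk => ?_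
  rw [Nat.choose_eq_zero_of_lt (by simpa [Nat.lt_succ_iff] using hk)]
  simp

/-- **Jensen polynomial convergence.**
For an entire function `f`, the rescaled Jensen polynomials
`J_{n,f}(z/n) = ∑_{k=0}^n f^{(k)}(0)·C(n,k)·(z/n)^k` converge to `f`
uniformly on every compact subset of `ℂ`. -/
theorem jensen_scaled_tendstoUniformlyOn (f : ℂ → ℂ) (hf : Differentiable ℂ f)
    (K : Set ℂ) (hK : IsCompact K) :
    TendstoUniformlyOn
      (fun (n : ℕ) (z : ℂ) =>
        ∑ k ∈ Finset.range (n + 1),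
          iteratedDeriv k f 0 * (n.choose k : ℂ) * (z / (n : ℂ)) ^ k)
      f atTop K := by
  obtain ⟨R, hR⟩ := hK.isBounded.exists_norm_le
  -- In a finite-dimensional space, convergence of the Taylor series at `R` is absolute.
  have hsum : Summable fun k => ‖taylorTerm f k R‖ := (hasSum_taylorTerm hf R).summable.norm
  have hbound : ∀ n k, |jensenWeight n k - 1| * ‖taylorTerm f k R‖ ≤ ‖taylorTerm f k R‖ :=
    fun n k => mul_le_of_le_one_left (norm_nonneg _) (abs_jensenWeight_sub_one_le n k)
  have hlim : Tendsto (fun n : ℕ => ∑' k, |jensenWeight n k - 1| * ‖taylorTerm f k R‖)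
      atTop (𝓝 0) := by
    rw [← tsum_zero (β := ℕ)]
    refine tendsto_tsum_of_dominated_convergence hsum (fun k => ?_)
      (Eventually.of_forall fun n k => ?_)
    · simpa using (((tendsto_jensenWeight k).sub_const 1).abs).mul_const ‖taylorTerm f k R‖
    · rw [Real.norm_of_nonneg (by positivity)]
      exact hbound n k
  rw [Metric.tendstoUniformlyOn_iff]
  intro ε hε
  filter_upwards [hlim.eventually_lt_const hε] with n hn z hz
  refine lt_of_le_of_lt ?_ hn
  have hS : Summable fun k => |jensenWeight n k - 1| * ‖taylorTerm f k R‖ :=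
    hsum.of_nonneg_of_le (fun k => by positivity) (hbound n)
  rw [dist_comm, dist_eq_norm]
  have hdiff := (hasSum_jensen f n z).sub (hasSum_taylorTerm hf z)
  rw [← hdiff.tsum_eq]
  refine tsum_of_norm_bounded hS.hasSum fun k => ?_
  rw [← sub_one_mul, norm_mul, ← Complex.ofReal_one, ← Complex.ofReal_sub, Complex.norm_real,
    Real.norm_eq_abs]
  gcongr
  exact norm_taylorTerm_le f k (hR z hz)
end

section
/- Let f be entire of strip type with parameter M for some M ≥ 0, with data (C, m, c, σ, (α_j)). Then the Appell polynomial A_{n,f} has all of its complex roots real for every n ≥ 0 if and only if every α_j is real (equivalently, every zero of f is real). -/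
/-!
A polynomial `p` is zero or has only real roots exactly when `‖p (x + i y)‖` is a nondecreasing
function of `|y|` for each real `x` (`vertMono_eval_iff`): each factor `z - r` with `r` real has this
property, and conversely a nonreal root forces `p` to vanish on a vertical segment. The condition
is an inequality between values, hence survives pointwise limits, and for entire functions it still
excludes nonreal zeros unless the function vanishes identically. It replaces the Hurwitz theorem
throughout.

If every `α_j` is real: formally `A_{n,f} = f(D) zⁿ`, so multiplying `f` by `β - α z` applies the
operator `β - α D` to each Appell polynomial (`appell_linear_mul`), and for real `α`, `β` this
operator preserves real-rootedness (`roots_real_sub_derivative`). Locally uniform limits of entire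
functions preserve the class of functions with real-rooted Appell polynomials
(`AppellReal.of_tendsto`), as the Taylor coefficients converge. The factors `exp (a z)` and
`exp (-σ² z² / 2)` are limits of powers of real-rooted polynomials, so the partial products of `f`,
and then `f`, belong to the class.

Conversely, the reversals of the Appell polynomials are the Jensen polynomials
`J_n(w) = ∑ C(n,k) f⁽ᵏ⁾(0) wᵏ`; they are real-rooted as well, and `J_n(z / n) → f z`
(`tendsto_jensen`). Hence `f` inherits the vertical monotonicity (`AppellReal.vertMono`). A nonreal
`α_j` would give the nonreal zero `1 / α_j` of `f`, hence `f = 0`, although the `m`-th derivative of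
`f` at `0` equals `m! C ≠ 0`.
-/

open Complex Filter Topology Polynomial

/-- The `n`-th Appell polynomial of an entire function `f`:
`A_{n,f}(z) = ∑_{k=0}^n f^{(k)}(0)·C(n,k)·z^{n-k}`. -/
noncomputable def appell (f : ℂ → ℂ) (n : ℕ) : Polynomial ℂ :=
  ∑ k ∈ Finset.range (n + 1),
    Polynomial.C (iteratedDeriv k f 0 * (n.choose k : ℂ)) * Polynomial.X ^ (n - k)

/-! ### Monotonicity of the modulus along vertical lines -/

/-- `‖g (x + i y)‖` is a nondecreasing function of `|y|` for every real `x`. For polynomials this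
is a reformulation of being zero or having only real roots that is visibly closed under pointwise
limits. -/
def VertMono (g : ℂ → ℂ) : Prop :=
  ∀ x y y' : ℝ, |y'| ≤ |y| → ‖g (x + y' * I)‖ ≤ ‖g (x + y * I)‖

lemma VertMono.of_tendsto {F : ℕ → ℂ → ℂ} {g : ℂ → ℂ} (hF : ∀ᶠ n in atTop, VertMono (F n))
    (h : ∀ z, Tendsto (fun n => F n z) atTop (𝓝 (g z))) : VertMono g := by
  intro x y y' hy
  refine le_of_tendsto_of_tendsto (h _).norm (h _).norm ?_
  filter_upwards [hF] with n hn using hn x y y' hy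

lemma vertMono_multiset_prod (s : Multiset ℂ) (hs : ∀ a ∈ s, a.im = 0) :
    VertMono fun z => (s.map fun a => z - a).prod := by
  intro x y y' hy
  induction s using Multiset.induction_on with
  | empty => simp
  | cons a s ih =>
    simp only [Multiset.map_cons, Multiset.prod_cons, norm_mul]
    have ha := hs a (by simp)
    refine mul_le_mul ?_ (ih fun b hb => hs b (by simp [hb])) (norm_nonneg _) (norm_nonneg _)
    rw [← sq_le_sq₀ (norm_nonneg _) (norm_nonneg _), ← normSq_eq_norm_sq, ← normSq_eq_norm_sq,
      normSq_apply, normSq_apply]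
    have := sq_le_sq.mpr hy
    simp [ha]
    nlinarith

lemma vertMono_of_roots_real {p : ℂ[X]} (hp : ∀ z ∈ p.roots, z.im = 0) :
    VertMono fun z => p.eval z := by
  intro x y y' hy
  have key (z : ℂ) : p.eval z = p.leadingCoeff * (p.roots.map fun a => z - a).prod := by
    rw [(IsAlgClosed.splits p).eval_eq_prod_roots]
  simp only [key, norm_mul]
  gcongr
  exact vertMono_multiset_prod _ hp x y y' hy

/-- The modulus of a vertically monotone function with a nonreal zero vanishes on a whole vertical
segment, so the identity theorem applies. -/
lemma VertMono.eq_zero {g : ℂ → ℂ} (h : VertMono g) (hg : Differentiable ℂ g) {z₀ : ℂ}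
    (hz : g z₀ = 0) (him : z₀.im ≠ 0) : g = 0 := by
  have hseg : ∀ t : ℝ, |t| ≤ |z₀.im| → g (z₀.re + t * I) = 0 := by
    intro t ht
    have := h z₀.re z₀.im t ht
    rw [re_add_im, hz, norm_zero] at this
    exact norm_le_zero_iff.mp this
  have han : AnalyticOnNhd ℂ g Set.univ := fun z _ => hg.analyticAt z
  have hmap : Tendsto (fun t : ℝ => (z₀.re : ℂ) + t * I) (𝓝[≠] 0) (𝓝[≠] (z₀.re : ℂ)) := by
    refine tendsto_nhdsWithin_iff.mpr ⟨?_, ?_⟩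
    · refine Tendsto.mono_left ?_ nhdsWithin_le_nhds
      have : Continuous fun t : ℝ => (z₀.re : ℂ) + t * I := by fun_prop
      simpa using this.tendsto 0
    · filter_upwards [self_mem_nhdsWithin] with t ht
      simpa using ht
  have hfreq : ∃ᶠ z in 𝓝[≠] (z₀.re : ℂ), g z = 0 := by
    refine hmap.frequently (Eventually.frequently ?_)
    refine Filter.Eventually.filter_mono nhdsWithin_le_nhds ?_
    have : ∀ᶠ t : ℝ in 𝓝 0, |t| < |z₀.im| :=
      continuous_abs.tendsto' 0 0 abs_zero |>.eventually_lt_const (abs_pos.mpr him)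
    filter_upwards [this] with t ht using hseg t ht.le
  funext z
  exact han.eqOn_zero_of_preconnected_of_frequently_eq_zero isPreconnected_univ
    (Set.mem_univ _) hfreq (Set.mem_univ z)

lemma vertMono_eval_iff {p : ℂ[X]} :
    VertMono (fun z => p.eval z) ↔ ∀ z ∈ p.roots, z.im = 0 := by
  refine ⟨fun h z hz => ?_, vertMono_of_roots_real⟩
  by_contra him
  have h0 := h.eq_zero p.differentiable (Polynomial.mem_roots'.mp hz).2 him
  refine (Polynomial.mem_roots'.mp hz).1 (Polynomial.funext fun w => ?_)
  simpa using congrFun h0 w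

/-! ### The operators `β - α D` on real-rooted polynomials -/

lemma im_sum_one_div_sub (s : Multiset ℂ) (hs : ∀ a ∈ s, a.im = 0) {z : ℂ} (hz : z.im ≠ 0) :
    (s.map fun a => 1 / (z - a)).sum.im * z.im ≤ 0 ∧
      ((s.map fun a => 1 / (z - a)).sum.im = 0 → s = 0) := by
  suffices H : (s.map fun a => 1 / (z - a)).sum.im * z.im ≤ 0 ∧
      (s ≠ 0 → (s.map fun a => 1 / (z - a)).sum.im * z.im < 0) by
    refine ⟨H.1, fun h => ?_⟩
    by_contra hne
    have hlt := H.2 hne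
    rw [h, zero_mul] at hlt
    exact lt_irrefl _ hlt
  induction s using Multiset.induction_on with
  | empty => simp
  | cons a s ih =>
    have ih := (ih fun b hb => hs b (by simp [hb])).1
    have ha := hs a (by simp)
    have hpos : 0 < normSq (z - a) := by
      rw [normSq_pos, sub_ne_zero]
      rintro rfl
      exact hz ha
    have h1 : (1 / (z - a)).im * z.im < 0 := by
      rw [one_div, inv_im, sub_im, ha, sub_zero, div_mul_eq_mul_div]
      refine div_neg_of_neg_of_pos ?_ hpos
      have := mul_self_pos.mpr hz
      linarith
    have h2 : (Multiset.map (fun a => 1 / (z - a)) (a ::ₘ s)).sum.im * z.im < 0 := by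
      rw [Multiset.map_cons, Multiset.sum_cons, add_im, add_mul]
      linarith
    exact ⟨h2.le, fun _ => h2⟩

/-- At a nonreal root `z` of `β p - α p'` one has `β = α ∑ 1 / (z - r)` over the roots `r` of `p`;
each summand has imaginary part of the sign of `-z.im`, so `α = 0` or `p` is constant, and in
either case `β p - α p'` is the zero polynomial. -/
lemma roots_real_sub_derivative {p : ℂ[X]} (hp : ∀ z ∈ p.roots, z.im = 0) (α β : ℝ) :
    ∀ z ∈ (Polynomial.C (β : ℂ) * p - Polynomial.C (α : ℂ) * derivative p).roots, z.im = 0 := by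
  intro z hz
  obtain ⟨hq, hz⟩ := Polynomial.mem_roots'.mp hz
  by_contra him
  have hp0 : p ≠ 0 := by rintro rfl; simp at hq
  have hpz : p.eval z ≠ 0 := fun h => him (hp z (Polynomial.mem_roots'.mpr ⟨hp0, h⟩))
  have hdiv := (IsAlgClosed.splits p).eval_derivative_div_eval_of_ne_zero hpz
  set S := (p.roots.map fun a => 1 / (z - a)).sum with hS
  have hβ : (β : ℂ) = α * S := by
    rw [← hdiv, mul_div_assoc', eq_div_iff hpz]
    simpa [sub_eq_zero] using hz
  have hαS : α * S.im = 0 := by simpa using (congrArg Complex.im hβ).symm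
  rcases mul_eq_zero.mp hαS with hα | hSim
  · apply hq
    simp [hβ, hα]
  · have hroots := (im_sum_one_div_sub p.roots hp him).2 hSim
    have hS0 : S = 0 := by simp [hS, hroots]
    have hder : derivative p = 0 := by
      have hd : p.natDegree = 0 := by
        rw [(IsAlgClosed.splits p).natDegree_eq_card_roots, hroots, Multiset.card_zero]
      exact derivative_of_natDegree_zero hd
    apply hq
    simp [hder, hβ, hS0]

/-! ### Entire functions with real-rooted Appell polynomials -/

/-- Entire functions all of whose Appell polynomials are zero or have only real roots. -/
def AppellReal (f : ℂ → ℂ) : Prop :=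
  Differentiable ℂ f ∧ ∀ n, ∀ z ∈ (appell f n).roots, z.im = 0

lemma iteratedDeriv_id_mul {f : ℂ → ℂ} (hf : Differentiable ℂ f) (k : ℕ) :
    iteratedDeriv (k + 1) (fun z => z * f z) 0 = (k + 1) * iteratedDeriv k f 0 := by
  have key : ∀ k : ℕ, ∀ z : ℂ, iteratedDeriv (k + 1) (fun z => z * f z) z
      = (k + 1) * iteratedDeriv k f z + z * iteratedDeriv (k + 1) f z := by
    have hd (j : ℕ) : Differentiable ℂ (iteratedDeriv j f) :=
      (hf.contDiff (n := ⊤)).differentiable_iteratedDeriv j (by simp)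
    intro k
    induction k with
    | zero =>
      intro z
      rw [iteratedDeriv_one, deriv_fun_mul differentiableAt_fun_id (hf z)]
      simp
    | succ k ih =>
      intro z
      rw [iteratedDeriv_succ, funext ih, deriv_fun_add, deriv_const_mul, deriv_fun_mul]
      · rw [← iteratedDeriv_succ, ← iteratedDeriv_succ]
        push_cast
        simp
        ring
      all_goals first | exact differentiableAt_fun_id | exact (hd _ z) | skip
      · exact ((hd _ z).const_mul _)
      · exact differentiableAt_fun_id.mul (hd _ z)
  simpa using key k 0

lemma iteratedDeriv_linear_mul {f : ℂ → ℂ} (hf : Differentiable ℂ f) (α β : ℂ) (k : ℕ) :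
    iteratedDeriv k (fun z => (β - α * z) * f z) 0
      = β * iteratedDeriv k f 0 - α * iteratedDeriv k (fun z => z * f z) 0 := by
  have h1 : (fun z => (β - α * z) * f z) = (fun z => β * f z) - (fun z => α * (z * f z)) := by
    funext z
    simp
    ring
  have hc : ∀ {g : ℂ → ℂ}, Differentiable ℂ g → ContDiffAt ℂ k g 0 := fun hg =>
    hg.contDiff.contDiffAt
  rw [h1, iteratedDeriv_sub, iteratedDeriv_const_mul, iteratedDeriv_const_mul]
  · exact hc (differentiable_fun_id.mul hf)
  · exact hc hf
  · exact hc (hf.const_mul _)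
  · exact hc ((differentiable_fun_id.mul hf).const_mul _)

/-- Formally `A_{n,f} = f(D) zⁿ`, so multiplying `f` by the variable differentiates `A_{n,f}`. -/
lemma appell_id_mul {f : ℂ → ℂ} (hf : Differentiable ℂ f) (n : ℕ) :
    appell (fun z => z * f z) n = derivative (appell f n) := by
  unfold appell
  rw [Finset.sum_range_succ', Finset.sum_range_succ, derivative_add, derivative_sum]
  have h0 : iteratedDeriv 0 (fun z => z * f z) 0 = 0 := by simp
  rw [h0]
  simp only [zero_mul, map_zero, add_zero, Nat.sub_self, pow_zero, mul_one, derivative_C]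
  refine Finset.sum_congr rfl fun k hk => ?_
  rw [iteratedDeriv_id_mul hf, derivative_C_mul_X_pow, Nat.sub_sub]
  congr 2
  have : ((n.choose (k + 1) : ℂ)) * (k + 1) = n.choose k * ((n - k : ℕ) : ℂ) := by
    exact_mod_cast Nat.choose_succ_right_eq n k
  linear_combination iteratedDeriv k f 0 * this

lemma appell_linear_mul {f : ℂ → ℂ} (hf : Differentiable ℂ f) (α β : ℂ) (n : ℕ) :
    appell (fun z => (β - α * z) * f z) n
      = Polynomial.C β * appell f n - Polynomial.C α * derivative (appell f n) := by
  rw [← appell_id_mul hf]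
  unfold appell
  rw [Finset.mul_sum, Finset.mul_sum, ← Finset.sum_sub_distrib]
  refine Finset.sum_congr rfl fun k _ => ?_
  rw [iteratedDeriv_linear_mul hf]
  simp only [map_mul, map_sub]
  ring

lemma AppellReal.linear_mul {f : ℂ → ℂ} (hf : AppellReal f) (α β : ℝ) :
    AppellReal fun z => ((β : ℂ) - α * z) * f z := by
  refine ⟨?_, fun n => ?_⟩
  · have := hf.1
    fun_prop
  · rw [appell_linear_mul hf.1]
    exact roots_real_sub_derivative (hf.2 n) α β

lemma AppellReal.linear_pow_mul {f : ℂ → ℂ} (hf : AppellReal f) (α β : ℝ) (N : ℕ) :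
    AppellReal fun z => ((β : ℂ) - α * z) ^ N * f z := by
  induction N with
  | zero => simpa using hf
  | succ N ih =>
    have := ih.linear_mul α β
    simpa only [← mul_assoc, ← pow_succ'] using this

lemma appellReal_const (C : ℂ) : AppellReal fun _ => C := by
  refine ⟨differentiable_const _, fun n z hz => ?_⟩
  have : appell (fun _ => C) n = Polynomial.C C * Polynomial.X ^ n := by
    unfold appell
    rw [Finset.sum_eq_single 0]
    · simp
    · intro k _ hk
      simp [iteratedDeriv_const, hk]
    · simp
  rw [this, Polynomial.mem_roots'] at hz
  obtain ⟨hne, hz⟩ := hz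
  have hC : C ≠ 0 := by rintro rfl; simp at hne
  have hz : z = 0 := by
    have : z ^ n = 0 := by simpa [hC] using hz
    exact eq_zero_of_pow_eq_zero this
  simp [hz]

lemma tendsto_iteratedDeriv {F : ℕ → ℂ → ℂ} {f : ℂ → ℂ} (hF : ∀ n, Differentiable ℂ (F n))
    (h : TendstoLocallyUniformly F f atTop) (k : ℕ) (z : ℂ) :
    Tendsto (fun n => iteratedDeriv k (F n) z) atTop (𝓝 (iteratedDeriv k f z)) := by
  have key : TendstoLocallyUniformlyOn (fun n => iteratedDeriv k (F n)) (iteratedDeriv k f)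
      atTop Set.univ := by
    induction k with
    | zero => simpa [tendstoLocallyUniformlyOn_univ] using h
    | succ k ih =>
      have := ih.deriv (Eventually.of_forall fun n =>
        ((hF n).contDiff (n := ⊤)).differentiable_iteratedDeriv k (by simp)
          |>.differentiableOn) isOpen_univ
      simpa only [iteratedDeriv_succ, Function.comp_def] using this
  exact key.tendsto_at (Set.mem_univ z)

lemma AppellReal.of_tendsto {F : ℕ → ℂ → ℂ} {f : ℂ → ℂ} (hF : ∀ n, AppellReal (F n))
    (h : TendstoLocallyUniformly F f atTop) : AppellReal f := by
  refine ⟨?_, fun n => vertMono_eval_iff.mp ?_⟩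
  · rw [← differentiableOn_univ]
    exact (tendstoLocallyUniformlyOn_univ.mpr h).differentiableOn
      (Eventually.of_forall fun n => (hF n).1.differentiableOn) isOpen_univ
  · refine VertMono.of_tendsto (F := fun N z => (appell (F N) n).eval z)
      (Eventually.of_forall fun N => vertMono_eval_iff.mpr ((hF N).2 n)) fun z => ?_
    simp only [appell, eval_finsetSum, eval_mul, eval_C, eval_pow, eval_X]
    refine tendsto_finsetSum _ fun k _ => ?_
    exact ((tendsto_iteratedDeriv (fun n => (hF n).1) h k 0).mul_const _).mul_const _

/-! ### Exponential factors -/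

/-- Telescoping of `a ^ N - b ^ N` with `a = 1 + x` and `b = exp x`, both of modulus at most
`exp ‖x‖`. -/
lemma norm_one_add_pow_sub_exp_le (N : ℕ) {x : ℂ} (hx : ‖x‖ ≤ 1) :
    ‖(1 + x) ^ N - exp (N * x)‖ ≤ N * Real.exp (N * ‖x‖) * ‖x‖ ^ 2 := by
  have h1 : ‖1 + x‖ ≤ Real.exp ‖x‖ := by
    refine (norm_add_le _ _).trans ?_
    rw [norm_one, add_comm]
    exact Real.add_one_le_exp _
  have h2 : ‖exp x‖ ≤ Real.exp ‖x‖ := norm_exp_le_exp_norm x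
  rw [exp_nat_mul, ← geom_sum₂_mul, norm_mul]
  refine mul_le_mul ?_ ?_ (norm_nonneg _) (by positivity)
  · refine (norm_sum_le _ _).trans ?_
    have : ∀ i ∈ Finset.range N, ‖(1 + x) ^ i * exp x ^ (N - 1 - i)‖ ≤ Real.exp (N * ‖x‖) := by
      intro i hi
      have hi := Finset.mem_range.mp hi
      rw [norm_mul, norm_pow, norm_pow]
      calc ‖1 + x‖ ^ i * ‖exp x‖ ^ (N - 1 - i)
          ≤ Real.exp ‖x‖ ^ i * Real.exp ‖x‖ ^ (N - 1 - i) := by gcongr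
        _ = Real.exp ‖x‖ ^ (i + (N - 1 - i)) := (pow_add _ _ _).symm
        _ ≤ Real.exp ‖x‖ ^ N :=
          pow_le_pow_right₀ (Real.one_le_exp (norm_nonneg _)) (by omega)
        _ = Real.exp (N * ‖x‖) := (Real.exp_nat_mul _ _).symm
    simpa using Finset.sum_le_sum this
  · have := norm_exp_sub_one_sub_id_le hx
    rwa [norm_sub_rev, ← sub_sub]

lemma tendstoLocallyUniformly_one_add_div_pow :
    TendstoLocallyUniformly (fun (N : ℕ) (w : ℂ) => (1 + w / (N + 1 : ℕ)) ^ (N + 1)) exp atTop := by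
  rw [tendstoLocallyUniformly_iff_forall_isCompact]
  intro K hK
  obtain ⟨R, hR⟩ := hK.isBounded.exists_norm_le
  have hlim : Tendsto (fun N : ℕ => Real.exp R * R ^ 2 / ((N + 1 : ℕ) : ℝ)) atTop (𝓝 0) :=
    (tendsto_const_div_atTop_nhds_zero_nat _).comp (tendsto_add_atTop_nat 1)
  rw [Metric.tendstoUniformlyOn_iff]
  intro ε hε
  filter_upwards [hlim.eventually_lt_const hε, eventually_ge_atTop ⌈R⌉₊] with N hN hNR w hw
  rw [dist_comm, dist_eq_norm]
  refine lt_of_le_of_lt ?_ hN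
  have hwR := hR w hw
  have hpos : (0 : ℝ) < ((N + 1 : ℕ) : ℝ) := by positivity
  have hposC : ((N + 1 : ℕ) : ℂ) ≠ 0 := by exact_mod_cast N.succ_ne_zero
  have hRN : R ≤ ((N + 1 : ℕ) : ℝ) := by
    refine (Nat.le_ceil R).trans ?_
    exact_mod_cast hNR.trans N.le_succ
  have hnorm : ‖w / ((N + 1 : ℕ) : ℂ)‖ = ‖w‖ / ((N + 1 : ℕ) : ℝ) := by
    rw [norm_div, Complex.norm_natCast]
  have := norm_one_add_pow_sub_exp_le (N + 1) (x := w / ((N + 1 : ℕ) : ℂ)) (by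
    rw [hnorm, div_le_one hpos]
    exact hwR.trans hRN)
  rw [hnorm, mul_div_cancel₀ _ hposC, mul_div_cancel₀ _ hpos.ne'] at this
  refine this.trans ?_
  have : ((N + 1 : ℕ) : ℝ) * Real.exp ‖w‖ * (‖w‖ / ((N + 1 : ℕ) : ℝ)) ^ 2
      = Real.exp ‖w‖ * ‖w‖ ^ 2 / ((N + 1 : ℕ) : ℝ) := by
    field_simp
  rw [this]
  gcongr

lemma AppellReal.of_exp_approx {f φ : ℂ → ℂ} (hf : AppellReal f) (hφ : Continuous φ)
    (h : ∀ N : ℕ, AppellReal fun z => (1 + φ z / (N + 1 : ℕ)) ^ (N + 1) * f z) :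
    AppellReal fun z => exp (φ z) * f z := by
  refine AppellReal.of_tendsto h ?_
  have h1 := tendstoLocallyUniformly_one_add_div_pow.comp φ hφ
  have h2 : TendstoLocallyUniformly (fun (_ : ℕ) z => f z) f atTop := by
    intro u hu x
    exact ⟨Set.univ, univ_mem, Eventually.of_forall fun _ y _ => refl_mem_uniformity hu⟩
  exact h1.mul₀ h2 (continuous_exp.comp hφ) hf.1.continuous

lemma AppellReal.exp_linear_mul {f : ℂ → ℂ} (hf : AppellReal f) (a : ℝ) :
    AppellReal fun z => exp (a * z) * f z := by
  refine hf.of_exp_approx (by fun_prop) fun N => ?_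
  convert hf.linear_pow_mul (-(a / (N + 1 : ℕ))) 1 (N + 1) using 4 with z
  push_cast
  ring

/-- The Gaussian factor is a limit of powers of
`1 - σ² z² / (2 N) = (1 - s z) (1 + s z)` with `s = σ / √(2 N)`. -/
lemma AppellReal.exp_neg_sq_mul {f : ℂ → ℂ} (hf : AppellReal f) (σ : ℝ) :
    AppellReal fun z => exp (-((σ : ℂ) ^ 2 / 2 * z ^ 2)) * f z := by
  refine hf.of_exp_approx (by fun_prop) fun N => ?_
  set s : ℝ := σ / √(2 * (N + 1 : ℕ)) with hs
  have hs2 : (s : ℂ) ^ 2 = (σ : ℂ) ^ 2 / (2 * (N + 1 : ℕ)) := by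
    have : s ^ 2 = σ ^ 2 / (2 * (N + 1 : ℕ)) := by
      rw [hs, div_pow, Real.sq_sqrt (by positivity)]
    exact_mod_cast congrArg (fun t : ℝ => (t : ℂ)) this
  convert (hf.linear_pow_mul s 1 (N + 1)).linear_pow_mul (-s) 1 (N + 1) using 2 with z
  rw [← mul_assoc, ← mul_pow]
  congr 2
  have : ((1 : ℝ) - ((-s : ℝ) : ℂ) * z) * ((1 : ℝ) - (s : ℂ) * z) = 1 - (s : ℂ) ^ 2 * z ^ 2 := by
    push_cast
    ring
  rw [this, hs2]
  have : ((N + 1 : ℕ) : ℂ) ≠ 0 := by exact_mod_cast N.succ_ne_zero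
  field_simp
  ring

lemma AppellReal.prod_mul {f : ℂ → ℂ} (hf : AppellReal f) {α : ℕ → ℂ} (hα : ∀ j, (α j).im = 0)
    (N : ℕ) :
    AppellReal fun z => (∏ j ∈ Finset.range N, ((1 - α j * z) * exp (α j * z))) * f z := by
  induction N with
  | zero => simpa using hf
  | succ N ih =>
    have hre : α N = ((α N).re : ℂ) := Complex.ext rfl (by simp [hα N])
    convert (ih.exp_linear_mul (α N).re).linear_mul (α N).re 1 using 2 with z
    rw [Finset.prod_range_succ, ← hre]
    push_cast
    ring

/-! ### Recovering the function from its Appell polynomials -/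

/-- The Jensen polynomial `∑ₖ C(n,k) f⁽ᵏ⁾(0) wᵏ`, the reversal of the Appell polynomial. -/
noncomputable def jensen (f : ℂ → ℂ) (n : ℕ) : ℂ[X] :=
  ∑ k ∈ Finset.range (n + 1),
    Polynomial.C (iteratedDeriv k f 0 * (n.choose k : ℂ)) * Polynomial.X ^ k

lemma jensen_eval {f : ℂ → ℂ} {n : ℕ} {w : ℂ} (hw : w ≠ 0) :
    (jensen f n).eval w = w ^ n * (appell f n).eval w⁻¹ := by
  simp only [jensen, appell, eval_finsetSum, eval_mul, eval_C, eval_pow, eval_X, Finset.mul_sum]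
  refine Finset.sum_congr rfl fun k hk => ?_
  have hk : k ≤ n := Nat.lt_succ_iff.mp (Finset.mem_range.mp hk)
  have : w ^ n = w ^ k * w ^ (n - k) := by rw [← pow_add, Nat.add_sub_cancel' hk]
  rw [this, inv_pow]
  field_simp

lemma jensen_roots_real {f : ℂ → ℂ} {n : ℕ} (h : ∀ z ∈ (appell f n).roots, z.im = 0) :
    ∀ z ∈ (jensen f n).roots, z.im = 0 := by
  intro z hz
  obtain ⟨hne, hz⟩ := Polynomial.mem_roots'.mp hz
  by_contra him
  have hz0 : z ≠ 0 := by rintro rfl; simp at him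
  have hA : appell f n ≠ 0 := by
    intro hA
    refine hne (Polynomial.eq_zero_of_infinite_isRoot _ ?_)
    refine (Set.finite_singleton (0 : ℂ)).infinite_compl.mono fun w hw => ?_
    simp [jensen_eval (f := f) (n := n) (w := w) hw, hA]
  have hroot : (appell f n).eval z⁻¹ = 0 := by
    have := jensen_eval (f := f) (n := n) hz0
    rw [hz.eq_zero] at this
    exact (mul_eq_zero.mp this.symm).resolve_left (pow_ne_zero _ hz0)
  have := h _ (Polynomial.mem_roots'.mpr ⟨hA, hroot⟩)
  rw [inv_im, div_eq_zero_iff] at this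
  rcases this with h | h
  · exact him (neg_eq_zero.mp h)
  · exact hz0 (normSq_eq_zero.mp h)

lemma tendsto_choose_div_pow (k : ℕ) :
    Tendsto (fun n : ℕ => (n.choose k : ℝ) / (n : ℝ) ^ k) atTop (𝓝 ((k.factorial : ℝ)⁻¹)) := by
  have h : Tendsto (fun n : ℕ => (n : ℝ) * (n : ℝ)⁻¹) atTop (𝓝 1) := by
    refine tendsto_const_nhds.congr' ?_
    filter_upwards [eventually_ge_atTop 1] with n hn
    rw [mul_inv_cancel₀]
    positivity
  simpa [div_eq_mul_inv, inv_pow] using ProbabilityTheory.tendsto_choose_mul_pow_atTop k h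

/-- Term-by-term limit of the expansion of the Jensen polynomial at `z / n`, dominated by the Taylor
series of `f` because `C(n,k) / nᵏ ≤ 1 / k!`. -/
lemma tendsto_jensen {f : ℂ → ℂ} (hf : Differentiable ℂ f) (z : ℂ) :
    Tendsto (fun n : ℕ => (jensen f n).eval (z / n)) atTop (𝓝 (f z)) := by
  have hsum := hasSum_taylorSeries_of_entire hf 0 z
  have hf_eq : f z = ∑' k : ℕ, (k.factorial : ℂ)⁻¹ * iteratedDeriv k f 0 * z ^ k := by
    rw [← hsum.tsum_eq]
    refine tsum_congr fun k => ?_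
    simp
    ring
  have hj (n : ℕ) : (jensen f n).eval (z / n)
      = ∑' k : ℕ, ((n.choose k / (n : ℝ) ^ k : ℝ) : ℂ) * iteratedDeriv k f 0 * z ^ k := by
    rw [tsum_eq_sum (s := Finset.range (n + 1))]
    · simp only [jensen, eval_finsetSum, eval_mul, eval_C, eval_pow, eval_X]
      refine Finset.sum_congr rfl fun k _ => ?_
      push_cast
      rw [div_pow]
      ring
    · intro k hk
      have : n.choose k = 0 := Nat.choose_eq_zero_of_lt (by simpa using hk)
      simp [this]
  simp_rw [hj, hf_eq]
  refine tendsto_tsum_of_dominated_convergence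
    (bound := fun k => ‖(k.factorial : ℂ)⁻¹ * iteratedDeriv k f 0 * z ^ k‖) ?_ ?_ ?_
  · have := hsum.summable.norm
    refine this.congr fun k => ?_
    congr 1
    simp
    ring
  · intro k
    refine (Tendsto.mul_const _ ?_).mul_const _
    have := (continuous_ofReal.tendsto _).comp (tendsto_choose_div_pow k)
    simpa [Function.comp_def] using this
  · refine Eventually.of_forall fun n k => ?_
    rw [norm_mul, norm_mul, norm_mul, norm_mul]
    gcongr
    rw [norm_real, norm_inv, Complex.norm_natCast, Real.norm_of_nonneg (by positivity)]
    have hle : (n.choose k : ℝ) ≤ (n : ℝ) ^ k / k.factorial := Nat.choose_le_pow_div k n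
    rcases eq_or_ne ((n : ℝ) ^ k) 0 with h0 | h0
    · rw [h0, div_zero]
      positivity
    · rw [div_le_iff₀ (by positivity)]
      rwa [inv_mul_eq_div]

/-- Scaling by a positive real preserves vertical monotonicity, so the property passes from the
Jensen polynomials to their scaling limit. -/
lemma AppellReal.vertMono {f : ℂ → ℂ} (hf : AppellReal f) : VertMono f := by
  refine VertMono.of_tendsto (F := fun n z => (jensen f n).eval (z / n))
    (Eventually.of_forall fun n => ?_) (tendsto_jensen hf.1)
  intro x y y' hy
  have hmono := vertMono_of_roots_real (jensen_roots_real (hf.2 n))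
  have key (t : ℝ) : ((x : ℂ) + t * I) / n = ((x / n : ℝ) : ℂ) + ((t / n : ℝ) : ℂ) * I := by
    push_cast
    ring
  simp only [key]
  refine hmono _ _ _ ?_
  rw [abs_div, abs_div]
  gcongr

lemma iteratedDeriv_pow_mul {h : ℂ → ℂ} (hh : Differentiable ℂ h) (m : ℕ) :
    iteratedDeriv m (fun z => z ^ m * h z) 0 = m.factorial * h 0 := by
  induction m with
  | zero => simp
  | succ m ih =>
    have : (fun z : ℂ => z ^ (m + 1) * h z) = fun z => z * (z ^ m * h z) := by
      funext z
      ring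
    rw [this, iteratedDeriv_id_mul (f := fun z => z ^ m * h z) (by fun_prop), ih,
      Nat.factorial_succ]
    push_cast
    ring

/-- For an entire function `f` of strip type with parameter `M ≥ 0` and data
`(C, m, c, σ, (α_j))`, all Appell polynomials `A_{n,f}` have only real roots if and
only if every `α_j` is real. -/
theorem appell_realRooted_iff_roots_real
    (M : ℝ) (hM : 0 ≤ M) (f : ℂ → ℂ) (hf : Differentiable ℂ f)
    (C : ℝ) (m : ℕ) (c σ : ℝ) (α : ℕ → ℂ)
    (hC : C ≠ 0)
    (hconj : ∃ e : Equiv.Perm ℕ, ∀ j, α (e j) = (starRingEnd ℂ) (α j))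
    (hsum : Summable fun j => ‖α j‖ ^ 2)
    (him : ∀ j, α j ≠ 0 → |(1 / α j).im| ≤ M)
    (hfeq : TendstoLocallyUniformly
      (fun (N : ℕ) (z : ℂ) => (C : ℂ) * z ^ m *
          Complex.exp (-(c : ℂ) * z - (σ : ℂ) ^ 2 / 2 * z ^ 2) *
          ∏ j ∈ Finset.range N, ((1 - α j * z) * Complex.exp (α j * z)))
      f atTop) :
    (∀ n : ℕ, ∀ z ∈ (appell f n).roots, z.im = 0) ↔ (∀ j, (α j).im = 0) := by
  constructor
  · intro hreal j
    by_contra hj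
    have hα0 : α j ≠ 0 := by
      intro h0
      simp [h0] at hj
    have hzero : f (α j)⁻¹ = 0 := by
      have hlim := (tendstoLocallyUniformlyOn_univ.mpr hfeq).tendsto_at
        (Set.mem_univ (α j)⁻¹)
      refine tendsto_nhds_unique hlim (tendsto_const_nhds.congr' ?_)
      filter_upwards [eventually_gt_atTop j] with N hN
      rw [Finset.prod_eq_zero (Finset.mem_range.mpr hN), mul_zero]
      rw [mul_inv_cancel₀ hα0, sub_self, zero_mul]
    have hf0 : f = 0 := by
      refine (AppellReal.vertMono ⟨hf, hreal⟩).eq_zero hf hzero ?_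
      rw [inv_im]
      exact div_ne_zero (neg_ne_zero.mpr hj) (normSq_eq_zero.not.mpr hα0)
    -- The `m`-th derivative at `0` of every partial product is `m! * C`, hence so is that of `f`.
    have hlim := tendsto_iteratedDeriv (fun N => by fun_prop) hfeq m 0
    have hconst : ∀ N : ℕ, iteratedDeriv m (fun z : ℂ => (C : ℂ) * z ^ m *
          Complex.exp (-(c : ℂ) * z - (σ : ℂ) ^ 2 / 2 * z ^ 2) *
          ∏ j ∈ Finset.range N, ((1 - α j * z) * Complex.exp (α j * z))) 0
        = m.factorial * C := by
      intro N
      have := iteratedDeriv_pow_mul (h := fun z : ℂ => (C : ℂ) *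
          Complex.exp (-(c : ℂ) * z - (σ : ℂ) ^ 2 / 2 * z ^ 2) *
          ∏ j ∈ Finset.range N, ((1 - α j * z) * Complex.exp (α j * z))) (by fun_prop) m
      simp only [mul_zero, sub_zero, exp_zero, Finset.prod_const_one, mul_one, ne_eq,
        OfNat.ofNat_ne_zero, not_false_eq_true, zero_pow] at this
      rw [← this]
      congr 1
      funext z
      ring
    simp only [hconst] at hlim
    have h0 : iteratedDeriv m f 0 = 0 := by
      rw [hf0]
      simp [Pi.zero_def]
    rw [h0] at hlim
    have := tendsto_nhds_unique hlim tendsto_const_nhds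
    have hfac : (m.factorial : ℂ) ≠ 0 := by exact_mod_cast m.factorial_ne_zero
    have hC' : (C : ℂ) ≠ 0 := by exact_mod_cast hC
    exact mul_ne_zero hfac hC' this.symm
  · intro hα
    refine (AppellReal.of_tendsto (fun N => ?_) hfeq).2
    have h := ((((appellReal_const C).linear_pow_mul (-1) 0 m).exp_neg_sq_mul σ).exp_linear_mul
      (-c)).prod_mul hα N
    convert h using 2 with z
    rw [sub_eq_add_neg, exp_add]
    push_cast
    ring
end
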